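/- arXiv:2212.13600 — 2 statements merged into one kernel-verified Lean document; each statement's English description precedes it below -/
import Mathlib

section
/- Let (A,·,[·,·,·]) be a coherence ternary F-manifold algebra. Then (A*; ad*, −L*) is a representation of the ternary F-manifold algebra A (the coadjoint representation), where A* is the linear dual of A, ad(x,y)z = [x,y,z] is the adjoint action, L(x)y = x·y is left multiplication, and ⟨ad*(x,y)ξ, z⟩ = −⟨ξ, [x,y,z]⟩, ⟨L*(x)ξ, z⟩ = −⟨ξ, x·z⟩ for all ξ ∈ A*, x,y,z ∈ A. -/
open TensorProduct

/-- The 3-Leibnizator `L(x1,x2,x3,x4) = [x1,x2,x3·x4] − x3·[x1,x2,x4] − [x1,x2,x3]·x4`. -/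
def leib3 {K : Type*} [Field K] {A : Type*} [AddCommGroup A] [Module K A]
    (m : A →ₗ[K] A →ₗ[K] A) (b : A →ₗ[K] A →ₗ[K] A →ₗ[K] A) (x1 x2 x3 x4 : A) : A :=
  b x1 x2 (m x3 x4) - m x3 (b x1 x2 x4) - m (b x1 x2 x3) x4

/-- A ternary F-manifold algebra. -/
structure TernaryFM (K : Type*) [Field K] (A : Type*) [AddCommGroup A] [Module K A] where
  mul : A →ₗ[K] A →ₗ[K] A
  br : A →ₗ[K] A →ₗ[K] A →ₗ[K] A
  mul_comm : ∀ x y, mul x y = mul y x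
  mul_assoc : ∀ x y z, mul (mul x y) z = mul x (mul y z)
  br_skew₁₂ : ∀ x y z, br x y z = - br y x z
  br_skew₂₃ : ∀ x y z, br x y z = - br x z y
  fund : ∀ x1 x2 x3 x4 x5,
    br x1 x2 (br x3 x4 x5) =
      br (br x1 x2 x3) x4 x5 + br x3 (br x1 x2 x4) x5 + br x3 x4 (br x1 x2 x5)
  leib : ∀ x1 x2 x3 x4 x5,
    leib3 mul br (mul x1 x2) x3 x4 x5 =
      mul x1 (leib3 mul br x2 x3 x4 x5) + mul x2 (leib3 mul br x1 x3 x4 x5)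

/-- A commutative associative algebra structure (as a bilinear map). -/
structure CommAssocAlg (K : Type*) [Field K] (B : Type*) [AddCommGroup B] [Module K B] where
  mul : B →ₗ[K] B →ₗ[K] B
  mul_comm : ∀ x y, mul x y = mul y x
  mul_assoc : ∀ x y z, mul (mul x y) z = mul x (mul y z)

/-- A ternary Nambu–Poisson algebra. -/
structure TernaryNP (K : Type*) [Field K] (A : Type*) [AddCommGroup A] [Module K A] where
  mul : A →ₗ[K] A →ₗ[K] A
  br : A →ₗ[K] A →ₗ[K] A →ₗ[K] A
  mul_comm : ∀ x y, mul x y = mul y x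
  mul_assoc : ∀ x y z, mul (mul x y) z = mul x (mul y z)
  br_skew₁₂ : ∀ x y z, br x y z = - br y x z
  br_skew₂₃ : ∀ x y z, br x y z = - br x z y
  fund : ∀ x1 x2 x3 x4 x5,
    br x1 x2 (br x3 x4 x5) =
      br (br x1 x2 x3) x4 x5 + br x3 (br x1 x2 x4) x5 + br x3 x4 (br x1 x2 x5)
  leibniz : ∀ x1 x2 x3 x4,
    br x1 x2 (mul x3 x4) = mul x3 (br x1 x2 x4) + mul (br x1 x2 x3) x4

/-- The binary Leibnizator `L(x,y,z) = [x,y·z] − [x,y]·z − y·[x,z]`. -/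
def leib2 {K : Type*} [Field K] {A : Type*} [AddCommGroup A] [Module K A]
    (m : A →ₗ[K] A →ₗ[K] A) (b : A →ₗ[K] A →ₗ[K] A) (x y z : A) : A :=
  b x (m y z) - m (b x y) z - m y (b x z)

/-- An F-manifold algebra. -/
structure FManifoldAlg (K : Type*) [Field K] (A : Type*) [AddCommGroup A] [Module K A] where
  mul : A →ₗ[K] A →ₗ[K] A
  br : A →ₗ[K] A →ₗ[K] A
  mul_comm : ∀ x y, mul x y = mul y x
  mul_assoc : ∀ x y z, mul (mul x y) z = mul x (mul y z)
  br_skew : ∀ x y, br x y = - br y x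
  jacobi : ∀ x y z, br x (br y z) + br y (br z x) + br z (br x y) = 0
  hm : ∀ x y z w,
    leib2 mul br (mul x y) z w = mul x (leib2 mul br y z w) + mul y (leib2 mul br x z w)

section Rep

variable {K : Type*} [Field K] {A V : Type*} [AddCommGroup A] [Module K A]
  [AddCommGroup V] [Module K V]

/-- Representation of the underlying 3-Lie algebra. -/
def Is3LieRep (T : TernaryFM K A) (ρ : A →ₗ[K] A →ₗ[K] V →ₗ[K] V) : Prop :=
  (∀ x y, ρ x y = - ρ y x) ∧
  (∀ x1 x2 x3 x4,
    ρ x1 x2 ∘ₗ ρ x3 x4 - ρ x3 x4 ∘ₗ ρ x1 x2 = ρ (T.br x1 x2 x3) x4 - ρ (T.br x1 x2 x4) x3) ∧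
  (∀ x1 x2 x3 x4,
    ρ (T.br x1 x2 x3) x4 = ρ x1 x2 ∘ₗ ρ x3 x4 + ρ x2 x3 ∘ₗ ρ x1 x4 + ρ x3 x1 ∘ₗ ρ x2 x4)

/-- Representation of the underlying commutative associative algebra. -/
def IsAssocRep (T : TernaryFM K A) (μ : A →ₗ[K] V →ₗ[K] V) : Prop :=
  ∀ x y, μ (T.mul x y) = μ x ∘ₗ μ y

/-- `L1(x,y,z,u) = ρ(x,y)μ(z)u − μ(z)ρ(x,y)u − μ([x,y,z])u`. -/
def L1 (T : TernaryFM K A) (ρ : A →ₗ[K] A →ₗ[K] V →ₗ[K] V) (μ : A →ₗ[K] V →ₗ[K] V)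
    (x y z : A) (u : V) : V :=
  ρ x y (μ z u) - μ z (ρ x y u) - μ (T.br x y z) u

/-- `L2(x,y,z,u) = μ(z)ρ(x,y)u + μ(y)ρ(x,z)u − ρ(x,y·z)u`. -/
def L2 (T : TernaryFM K A) (ρ : A →ₗ[K] A →ₗ[K] V →ₗ[K] V) (μ : A →ₗ[K] V →ₗ[K] V)
    (x y z : A) (u : V) : V :=
  μ z (ρ x y u) + μ y (ρ x z u) - ρ x (T.mul y z) u

/-- `L3(x,y,z,u) = ρ(x,y)μ(z)u + ρ(x,z)μ(y)u − ρ(x,y·z)u`. -/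
def L3 (T : TernaryFM K A) (ρ : A →ₗ[K] A →ₗ[K] V →ₗ[K] V) (μ : A →ₗ[K] V →ₗ[K] V)
    (x y z : A) (u : V) : V :=
  ρ x y (μ z u) + ρ x z (μ y u) - ρ x (T.mul y z) u

/-- Representation of a ternary F-manifold algebra. -/
def IsFMRep (T : TernaryFM K A) (ρ : A →ₗ[K] A →ₗ[K] V →ₗ[K] V)
    (μ : A →ₗ[K] V →ₗ[K] V) : Prop :=
  Is3LieRep T ρ ∧ IsAssocRep T μ ∧
  (∀ x1 x2 x3 x4 u, L1 T ρ μ (T.mul x1 x2) x3 x4 u =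
      μ x1 (L1 T ρ μ x2 x3 x4 u) + μ x2 (L1 T ρ μ x1 x3 x4 u)) ∧
  (∀ x1 x2 x3 x4 u, L2 T ρ μ (T.mul x1 x2) x3 x4 u =
      μ x1 (L2 T ρ μ x2 x3 x4 u) + μ x2 (L2 T ρ μ x1 x3 x4 u)) ∧
  (∀ x1 x2 x3 x4 u, μ (leib3 T.mul T.br x1 x2 x3 x4) u =
      L2 T ρ μ x2 x3 x4 (μ x1 u) - μ x1 (L2 T ρ μ x2 x3 x4 u))

/-- Relative Rota–Baxter operator on a ternary F-manifold algebra. -/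
def IsRelRB (T : TernaryFM K A) (ρ : A →ₗ[K] A →ₗ[K] V →ₗ[K] V)
    (μ : A →ₗ[K] V →ₗ[K] V) (Tm : V →ₗ[K] A) : Prop :=
  (∀ u v, T.mul (Tm u) (Tm v) = Tm (μ (Tm u) v + μ (Tm v) u)) ∧
  (∀ u v w, T.br (Tm u) (Tm v) (Tm w) =
      Tm (ρ (Tm u) (Tm v) w + ρ (Tm v) (Tm w) u + ρ (Tm w) (Tm u) v))

end Rep

section Pre

variable {K : Type*} [Field K] {A : Type*} [AddCommGroup A] [Module K A]

/-- Cyclic sum bracket `[x,y,z]^C = {x,y,z} + {y,z,x} + {z,x,y}`. -/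
def cbr (t : A →ₗ[K] A →ₗ[K] A →ₗ[K] A) (x y z : A) : A :=
  t x y z + t y z x + t z x y

/-- Symmetrized product `x·y = x⋄y + y⋄x`. -/
def sym (d : A →ₗ[K] A →ₗ[K] A) (x y : A) : A := d x y + d y x

/-- `F1(x1,x2,x3,x4) = {x1,x2,x3⋄x4} − x3⋄{x1,x2,x4} − [x1,x2,x3]⋄x4`. -/
def F1 (d : A →ₗ[K] A →ₗ[K] A) (t : A →ₗ[K] A →ₗ[K] A →ₗ[K] A) (x1 x2 x3 x4 : A) : A :=
  t x1 x2 (d x3 x4) - d x3 (t x1 x2 x4) - d (cbr t x1 x2 x3) x4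

/-- `F2(x1,x2,x3,x4) = x3⋄{x1,x2,x4} + x2⋄{x1,x3,x4} − {x1,x2·x3,x4}`. -/
def F2 (d : A →ₗ[K] A →ₗ[K] A) (t : A →ₗ[K] A →ₗ[K] A →ₗ[K] A) (x1 x2 x3 x4 : A) : A :=
  d x3 (t x1 x2 x4) + d x2 (t x1 x3 x4) - t x1 (sym d x2 x3) x4

/-- The 3-Leibnizator of the sub-adjacent operations. -/
def Lpre (d : A →ₗ[K] A →ₗ[K] A) (t : A →ₗ[K] A →ₗ[K] A →ₗ[K] A) (x1 x2 x3 x4 : A) : A :=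
  cbr t x1 x2 (sym d x3 x4) - sym d x3 (cbr t x1 x2 x4) - sym d (cbr t x1 x2 x3) x4

/-- A 3-pre-Lie algebra. -/
structure ThreePreLie (K : Type*) [Field K] (A : Type*) [AddCommGroup A] [Module K A] where
  tri : A →ₗ[K] A →ₗ[K] A →ₗ[K] A
  tri_skew : ∀ x y z, tri x y z = - tri y x z
  preLie₁ : ∀ x1 x2 x3 x4 x5,
    tri x1 x2 (tri x3 x4 x5) =
      tri (cbr tri x1 x2 x3) x4 x5 + tri x3 (cbr tri x1 x2 x4) x5 + tri x3 x4 (tri x1 x2 x5)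
  preLie₂ : ∀ x1 x2 x3 x4 x5,
    tri (cbr tri x1 x2 x3) x4 x5 =
      tri x1 x2 (tri x3 x4 x5) + tri x2 x3 (tri x1 x4 x5) + tri x3 x1 (tri x2 x4 x5)

/-- A ternary pre-F-manifold algebra. -/
structure TernaryPreFM (K : Type*) [Field K] (A : Type*) [AddCommGroup A] [Module K A] where
  dia : A →ₗ[K] A →ₗ[K] A
  tri : A →ₗ[K] A →ₗ[K] A →ₗ[K] A
  zinbiel : ∀ x y z, dia x (dia y z) = dia (dia y x) z + dia (dia x y) z
  tri_skew : ∀ x y z, tri x y z = - tri y x z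
  preLie₁ : ∀ x1 x2 x3 x4 x5,
    tri x1 x2 (tri x3 x4 x5) =
      tri (cbr tri x1 x2 x3) x4 x5 + tri x3 (cbr tri x1 x2 x4) x5 + tri x3 x4 (tri x1 x2 x5)
  preLie₂ : ∀ x1 x2 x3 x4 x5,
    tri (cbr tri x1 x2 x3) x4 x5 =
      tri x1 x2 (tri x3 x4 x5) + tri x2 x3 (tri x1 x4 x5) + tri x3 x1 (tri x2 x4 x5)
  pf1 : ∀ x1 x2 x3 x4 x5,
    F1 dia tri (sym dia x1 x2) x3 x4 x5 =
      dia x1 (F1 dia tri x2 x3 x4 x5) + dia x2 (F1 dia tri x1 x3 x4 x5)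
  pf2 : ∀ x1 x2 x3 x4 x5,
    F2 dia tri (sym dia x1 x2) x3 x4 x5 =
      dia x1 (F2 dia tri x2 x3 x4 x5) + dia x2 (F2 dia tri x1 x3 x4 x5)
  pf3 : ∀ x1 x2 x3 x4 x5,
    dia (Lpre dia tri x1 x2 x3 x4) x5 =
      F2 dia tri x2 x3 x4 (dia x1 x5) - dia x1 (F2 dia tri x2 x3 x4 x5)

/-- A ternary pre-Nambu–Poisson algebra. -/
structure TernaryPreNP (K : Type*) [Field K] (A : Type*) [AddCommGroup A] [Module K A] where
  dia : A →ₗ[K] A →ₗ[K] A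
  tri : A →ₗ[K] A →ₗ[K] A →ₗ[K] A
  zinbiel : ∀ x y z, dia x (dia y z) = dia (dia y x) z + dia (dia x y) z
  tri_skew : ∀ x y z, tri x y z = - tri y x z
  preLie₁ : ∀ x1 x2 x3 x4 x5,
    tri x1 x2 (tri x3 x4 x5) =
      tri (cbr tri x1 x2 x3) x4 x5 + tri x3 (cbr tri x1 x2 x4) x5 + tri x3 x4 (tri x1 x2 x5)
  preLie₂ : ∀ x1 x2 x3 x4 x5,
    tri (cbr tri x1 x2 x3) x4 x5 =
      tri x1 x2 (tri x3 x4 x5) + tri x2 x3 (tri x1 x4 x5) + tri x3 x1 (tri x2 x4 x5)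
  np1 : ∀ x1 x2 x3 x4,
    tri x1 x2 (dia x3 x4) = dia x3 (tri x1 x2 x4) + dia (cbr tri x1 x2 x3) x4
  np2 : ∀ x1 x2 x3 x4,
    tri x1 (sym dia x2 x3) x4 = dia x3 (tri x1 x2 x4) + dia x2 (tri x1 x3 x4)

end Pre

/-- The coherence map `K(x,y,z,u) = [x,y,z·u] + [x,z,u·y] + [x,u,y·z]`. -/
def kmap {K : Type*} [Field K] {A : Type*} [AddCommGroup A] [Module K A]
    (T : TernaryFM K A) (x y z u : A) : A :=
  T.br x y (T.mul z u) + T.br x z (T.mul u y) + T.br x u (T.mul y z)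

section SD

variable {K : Type*} [Field K] {A V : Type*} [AddCommGroup A] [Module K A]
  [AddCommGroup V] [Module K V]

/-- Semidirect product multiplication on `A × V`. -/
def sdMul (T : TernaryFM K A) (μ : A →ₗ[K] V →ₗ[K] V) (p q : A × V) : A × V :=
  (T.mul p.1 q.1, μ p.1 q.2 + μ q.1 p.2)

/-- Semidirect product ternary bracket on `A × V`. -/
def sdBr (T : TernaryFM K A) (ρ : A →ₗ[K] A →ₗ[K] V →ₗ[K] V) (p q r : A × V) : A × V :=
  (T.br p.1 q.1 r.1, ρ p.1 q.1 r.2 - ρ p.1 r.1 q.2 + ρ q.1 r.1 p.2)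

/-- The Nijenhuis operator `N_T(x+u) = Tu` on `A × V`. -/
def nT (Tm : V →ₗ[K] A) (p : A × V) : A × V := (Tm p.2, 0)

end SD

/-!
Pairing with `w ∈ A` turns every condition on `(A*; ad*, −L*)` into an identity in `A`: `L1` becomes
the Leibnizator and `L2` becomes `-K`, so the first and third coherence identities are the first and
third compatibility conditions. The condition on `L2` asks for
`K(x·y,z,t,u) = K(y,z,t,x·u) + K(x,z,t,y·u)`. Adding the third coherence identity to its copy with
`x` and `y` exchanged kills the Leibnizator, which is skew in `x, y`, and leaves
`x·K(y,z,t,u) + y·K(x,z,t,u)` on the other side; this is `K(x·y,z,t,u)` because `K` is the cyclic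
sum of Leibnizators.
-/

namespace TernaryFM

variable {K : Type*} [Field K] {A : Type*} [AddCommGroup A] [Module K A] (T : TernaryFM K A)

theorem br_rotate (x y z : A) : T.br x y z = T.br y z x := by
  rw [T.br_skew₁₂, T.br_skew₂₃, neg_neg]

/- The fundamental identities for `[x1,x2,[x3,z,x4]]` and `[x3,z,[x1,x2,x4]]` express the commutator
of `ad(x1,x2)` and `ad(x3,z)` at `x4` in two ways; adding them cancels it. -/
theorem br_br_left (x1 x2 x3 x4 z : A) :
    T.br (T.br x1 x2 x3) x4 z =
      T.br x4 x3 (T.br x1 x2 z) + T.br x4 x1 (T.br x2 x3 z) + T.br x4 x2 (T.br x3 x1 z) := by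
  have commutator := T.fund x1 x2 x3 z x4
  have commutator_neg := T.fund x3 z x1 x2 x4
  rw [T.br_skew₂₃ (T.br x1 x2 x3) x4 z, T.br_rotate x4 x3, T.br_rotate x4 x1,
    T.br_rotate x2 x3 z, T.br_skew₂₃ x3 x1 z, map_neg, ← T.br_skew₁₂ x2 x4,
    ← T.br_rotate _ x2 x4]
  linear_combination (norm := module) commutator + commutator_neg

theorem leib3_swap (x y z u : A) :
    leib3 T.mul T.br x y z u = -leib3 T.mul T.br y x z u := by
  simp only [leib3, T.br_skew₁₂ x y, map_neg, LinearMap.neg_apply]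
  abel

theorem kmap_eq_sum_leib3 (x y z u : A) :
    kmap T x y z u =
      leib3 T.mul T.br x y z u + leib3 T.mul T.br x z u y + leib3 T.mul T.br x u y z := by
  simp only [kmap, leib3]
  rw [T.br_skew₂₃ x z y, T.br_skew₂₃ x u y, T.br_skew₂₃ x u z, T.mul_comm (T.br x y z) u,
    T.mul_comm (-T.br x y u) z, T.mul_comm (T.br x z u) y]
  simp only [map_neg]
  abel

theorem kmap_mul_left (x1 x2 y z u : A) :
    kmap T (T.mul x1 x2) y z u =
      T.mul x1 (kmap T x2 y z u) + T.mul x2 (kmap T x1 y z u) := by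
  simp only [kmap_eq_sum_leib3, T.leib, map_add]
  abel

theorem kmap_mul_left_of_leib3_mul
    (leib3_mul : ∀ x y z t u, T.mul (leib3 T.mul T.br x y z t) u =
      kmap T y z t (T.mul x u) - T.mul x (kmap T y z t u)) (x y z t u : A) :
    kmap T (T.mul x y) z t u = kmap T y z t (T.mul x u) + kmap T x z t (T.mul y u) := by
  have leib3_cancel :
      T.mul (leib3 T.mul T.br x y z t) u + T.mul (leib3 T.mul T.br y x z t) u = 0 := by
    rw [T.leib3_swap x y, map_neg, LinearMap.neg_apply, neg_add_cancel]
  rw [leib3_mul, leib3_mul] at leib3_cancel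
  rw [kmap_mul_left]
  linear_combination (norm := module) -leib3_cancel

/-- The coadjoint action `ad*` of the underlying 3-Lie algebra on the linear dual,
`⟨ad*(x,y)ξ, z⟩ = −⟨ξ, [x,y,z]⟩`. -/
def coad : A →ₗ[K] A →ₗ[K] (A →ₗ[K] K) →ₗ[K] (A →ₗ[K] K) :=
  (-T.br).compr₂ Module.Dual.transpose

/-- The action `−L*` of the underlying commutative algebra on the linear dual. The sign cancels the
one in `L*`, so this is the plain transpose of multiplication. -/
def dualMul : A →ₗ[K] (A →ₗ[K] K) →ₗ[K] (A →ₗ[K] K) :=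
  Module.Dual.transpose ∘ₗ T.mul

theorem coad_apply (x y : A) (ξ : A →ₗ[K] K) (z : A) : T.coad x y ξ z = -ξ (T.br x y z) :=
  map_neg ξ (T.br x y z)

theorem dualMul_apply (x : A) (ξ : A →ₗ[K] K) (z : A) : T.dualMul x ξ z = ξ (T.mul x z) :=
  rfl

theorem is3LieRep_coad : Is3LieRep T T.coad := by
  refine ⟨fun x y => ?_, fun x1 x2 x3 x4 => ?_, fun x1 x2 x3 x4 => ?_⟩ <;> ext ξ z
  · simp only [LinearMap.neg_apply, coad_apply, T.br_skew₁₂ x y z, map_neg]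
  · simp only [LinearMap.sub_apply, LinearMap.comp_apply, coad_apply, T.fund x1 x2 x3 x4 z,
      T.br_skew₁₂ (T.br x1 x2 x4) x3 z, map_add, map_neg]
    ring
  · simp only [LinearMap.add_apply, LinearMap.comp_apply, coad_apply, T.br_br_left x1 x2 x3 x4 z,
      T.br_skew₁₂ x4, map_add, map_neg]
    ring

theorem isAssocRep_dualMul : IsAssocRep T T.dualMul := by
  intro x y
  ext ξ z
  simp only [LinearMap.comp_apply, dualMul_apply, T.mul_comm x y, T.mul_assoc]

theorem L1_coad_apply (x y z : A) (ξ : A →ₗ[K] K) (w : A) :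
    L1 T T.coad T.dualMul x y z ξ w = ξ (leib3 T.mul T.br x y z w) := by
  simp only [L1, leib3, LinearMap.sub_apply, coad_apply, dualMul_apply, map_sub]
  ring

theorem L2_coad_apply (x y z : A) (ξ : A →ₗ[K] K) (w : A) :
    L2 T T.coad T.dualMul x y z ξ w = -ξ (kmap T x y z w) := by
  simp only [L2, kmap, LinearMap.sub_apply, LinearMap.add_apply, coad_apply, dualMul_apply,
    map_add, map_neg, T.br_skew₂₃ x (T.mul y z) w, T.mul_comm w y]
  ring

end TernaryFM

theorem stmt7_general {K : Type*} [Field K] {A : Type*} [AddCommGroup A] [Module K A]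
    (T : TernaryFM K A)
    (leib3_mul_left : ∀ x y z t u, leib3 T.mul T.br (T.mul x y) z t u =
      leib3 T.mul T.br y z t (T.mul x u) + leib3 T.mul T.br x z t (T.mul y u))
    (leib3_mul : ∀ x y z t u, T.mul (leib3 T.mul T.br x y z t) u =
      kmap T y z t (T.mul x u) - T.mul x (kmap T y z t u)) :
    IsFMRep T T.coad T.dualMul := by
  refine ⟨T.is3LieRep_coad, T.isAssocRep_dualMul, fun x1 x2 x3 x4 ξ => ?_,
    fun x1 x2 x3 x4 ξ => ?_, fun x1 x2 x3 x4 ξ => ?_⟩ <;> ext w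
  · simp only [LinearMap.add_apply, T.L1_coad_apply, T.dualMul_apply, leib3_mul_left, map_add]
  · simp only [LinearMap.add_apply, T.L2_coad_apply, T.dualMul_apply,
      T.kmap_mul_left_of_leib3_mul leib3_mul, map_add, neg_add]
  · simp only [LinearMap.sub_apply, T.L2_coad_apply, T.dualMul_apply, leib3_mul, map_sub]
    ring

/-- for a coherence ternary F-manifold algebra, the coadjoint
representation `(A*; ad*, −L*)` is a representation of `A`. -/
theorem stmt7 {K : Type*} [Field K] [CharZero K]
    {A : Type*} [AddCommGroup A] [Module K A] (T : TernaryFM K A)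
    (hc1 : ∀ x y z t u, leib3 T.mul T.br (T.mul x y) z t u =
      leib3 T.mul T.br y z t (T.mul x u) + leib3 T.mul T.br x z t (T.mul y u))
    (hc2 : ∀ x y z t u, kmap T (T.mul x y) z t u =
      - kmap T x z t (T.mul y u) - kmap T y z t (T.mul x u))
    (hc3 : ∀ x y z t u, T.mul (leib3 T.mul T.br x y z t) u =
      kmap T y z t (T.mul x u) - T.mul x (kmap T y z t u)) :
    ∃ (ρd : A →ₗ[K] A →ₗ[K] (A →ₗ[K] K) →ₗ[K] (A →ₗ[K] K))
      (μd : A →ₗ[K] (A →ₗ[K] K) →ₗ[K] (A →ₗ[K] K)),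
      (∀ (x y : A) (ξ : A →ₗ[K] K) (z : A), ρd x y ξ z = - ξ (T.br x y z)) ∧
      (∀ (x : A) (ξ : A →ₗ[K] K) (z : A), μd x ξ z = ξ (T.mul x z)) ∧
      IsFMRep T ρd μd := by
  exact ⟨T.coad, T.dualMul, T.coad_apply, T.dualMul_apply, stmt7_general T hc1 hc3⟩
end

section
/- Let (A,⋄,{·,·,·}) be a ternary pre-Nambu-Poisson algebra. Then (A,·,[·,·,·]) is a ternary Nambu-Poisson algebra, where x·y = x⋄y + y⋄x and [x,y,z] = {x,y,z} + {y,z,x} + {z,x,y}. -/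
open TensorProduct

/-!
For the fundamental identity, expand `[x1,x2,w]` with `w = [x3,x4,x5]` as
`{x1,x2,w} + {x2,w,x1} + {w,x1,x2}`. The first 3-pre-Lie identity makes the first summand act on
each of the three terms of `w`; the second turns the other two into cyclic sums of
`{a,b,{x2,c,x1}}` and `{a,b,{c,x1,x2}}`, and these complete each `{a,b,{x1,x2,c}}` left by the
first to `{a,b,[x1,x2,c]}`. The Leibniz rule has the same shape: the compatibility conditions turn
the three terms of `[x1,x2,x3·x4]` into `⋄`-products which regroup into brackets. Associativity
holds because a Zinbiel product satisfies `(x·y)⋄z = x⋄(y⋄z)`.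
-/

section Symmetrization

variable {K : Type*} [Field K] {A : Type*} [AddCommGroup A] [Module K A]

/-- The symmetrized product `sym d` as a bilinear map. -/
def symLinear (d : A →ₗ[K] A →ₗ[K] A) : A →ₗ[K] A →ₗ[K] A :=
  d + d.flip

/-- The cyclic sum bracket `cbr t` as a trilinear map; the last two summands are
`(x, y, z) ↦ t y z x` and `(x, y, z) ↦ t z x y`. -/
def cbrLinear (t : A →ₗ[K] A →ₗ[K] A →ₗ[K] A) : A →ₗ[K] A →ₗ[K] A →ₗ[K] A :=
  let swapLast : (A →ₗ[K] A →ₗ[K] A) →ₗ[K] (A →ₗ[K] A →ₗ[K] A) := LinearMap.lflip.toLinearMap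
  t + (swapLast ∘ₗ t).flip + swapLast ∘ₗ t.flip

theorem sym_comm (d : A →ₗ[K] A →ₗ[K] A) (x y : A) : sym d x y = sym d y x :=
  add_comm _ _

theorem cbr_rotate (t : A →ₗ[K] A →ₗ[K] A →ₗ[K] A) (x y z : A) :
    cbr t x y z = cbr t y z x := by
  simp only [cbr]
  abel

theorem map_cbr {B : Type*} [AddCommGroup B] [Module K B] (f : A →ₗ[K] B)
    (t : A →ₗ[K] A →ₗ[K] A →ₗ[K] A) (x y z : A) :
    f (cbr t x y z) = f (t x y z) + f (t y z x) + f (t z x y) := by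
  simp only [cbr, map_add]

theorem cbr_skew₁₂ {t : A →ₗ[K] A →ₗ[K] A →ₗ[K] A} (ht : ∀ x y z, t x y z = -t y x z)
    (x y z : A) : cbr t x y z = -cbr t y x z := by
  simp only [cbr]
  rw [ht x y z, ht y z x, ht z x y]
  abel

theorem cbr_skew₂₃ {t : A →ₗ[K] A →ₗ[K] A →ₗ[K] A} (ht : ∀ x y z, t x y z = -t y x z)
    (x y z : A) : cbr t x y z = -cbr t x z y := by
  rw [cbr_rotate, cbr_skew₁₂ ht, ← cbr_rotate t x z y]

end Symmetrization

section Zinbiel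

variable {K : Type*} [Field K] {A : Type*} [AddCommGroup A] [Module K A]

/-- The bilinear product `d` makes `A` a Zinbiel algebra. -/
def IsZinbiel (d : A →ₗ[K] A →ₗ[K] A) : Prop :=
  ∀ x y z, d x (d y z) = d (d y x) z + d (d x y) z

namespace IsZinbiel

variable {d : A →ₗ[K] A →ₗ[K] A}

theorem sym_left (hd : IsZinbiel d) (x y z : A) : d (sym d x y) z = d x (d y z) := by
  rw [hd x y z, sym, map_add, LinearMap.add_apply, add_comm]

theorem left_comm (hd : IsZinbiel d) (x y z : A) : d x (d y z) = d y (d x z) := by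
  rw [← hd.sym_left, sym_comm, hd.sym_left]

theorem sym_assoc (hd : IsZinbiel d) (x y z : A) :
    sym d (sym d x y) z = sym d x (sym d y z) :=
  calc
    sym d (sym d x y) z = d x (d y z) + (d z (d x y) + d z (d y x)) := by
      rw [sym, hd.sym_left, sym, map_add]
    _ = d x (d y z) + d x (d z y) + d y (d z x) := by
      rw [hd.left_comm z x y, hd.left_comm z y x, add_assoc]
    _ = sym d x (sym d y z) := by
      rw [sym, hd.sym_left, sym, map_add]

end IsZinbiel

end Zinbiel

namespace ThreePreLie

variable {K : Type*} [Field K] {A : Type*} [AddCommGroup A] [Module K A] (T : ThreePreLie K A)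

theorem tri_cbr_middle (u a b c v : A) :
    T.tri u (cbr T.tri a b c) v =
      T.tri a b (T.tri u c v) + T.tri b c (T.tri u a v) + T.tri c a (T.tri u b v) := by
  rw [T.tri_skew, T.preLie₂, T.tri_skew c u, T.tri_skew a u, T.tri_skew b u]
  simp only [map_neg]
  abel

theorem tri_cbr_right (u v a b c : A) :
    T.tri u v (cbr T.tri a b c) =
      (T.tri (cbr T.tri u v a) b c + T.tri a (cbr T.tri u v b) c + T.tri a b (T.tri u v c)) +
      (T.tri (cbr T.tri u v b) c a + T.tri b (cbr T.tri u v c) a + T.tri b c (T.tri u v a)) +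
      (T.tri (cbr T.tri u v c) a b + T.tri c (cbr T.tri u v a) b + T.tri c a (T.tri u v b)) := by
  rw [map_cbr, T.preLie₁ u v a b c, T.preLie₁ u v b c a, T.preLie₁ u v c a b]

theorem tri_cbr_middle_add_tri_cbr_left (u v a b c : A) :
    T.tri v (cbr T.tri a b c) u + T.tri (cbr T.tri a b c) u v =
      (T.tri a b (cbr T.tri u v c) - T.tri a b (T.tri u v c)) +
      (T.tri b c (cbr T.tri u v a) - T.tri b c (T.tri u v a)) +
      (T.tri c a (cbr T.tri u v b) - T.tri c a (T.tri u v b)) := by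
  rw [T.tri_cbr_middle, T.preLie₂ a b c,
    map_cbr (T.tri a b), map_cbr (T.tri b c), map_cbr (T.tri c a)]
  abel

theorem cbr_cbr_right (u v a b c : A) :
    cbr T.tri u v (cbr T.tri a b c) =
      (T.tri (cbr T.tri u v a) b c + T.tri a (cbr T.tri u v b) c + T.tri a b (cbr T.tri u v c)) +
      (T.tri (cbr T.tri u v b) c a + T.tri b (cbr T.tri u v c) a + T.tri b c (cbr T.tri u v a)) +
      (T.tri (cbr T.tri u v c) a b + T.tri c (cbr T.tri u v a) b +
        T.tri c a (cbr T.tri u v b)) := by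
  rw [cbr, add_assoc, T.tri_cbr_middle_add_tri_cbr_left, T.tri_cbr_right]
  abel

theorem cbr_fundamental (x1 x2 x3 x4 x5 : A) :
    cbr T.tri x1 x2 (cbr T.tri x3 x4 x5) =
      cbr T.tri (cbr T.tri x1 x2 x3) x4 x5 + cbr T.tri x3 (cbr T.tri x1 x2 x4) x5 +
        cbr T.tri x3 x4 (cbr T.tri x1 x2 x5) := by
  rw [T.cbr_cbr_right]
  generalize cbr T.tri x1 x2 x3 = y3, cbr T.tri x1 x2 x4 = y4, cbr T.tri x1 x2 x5 = y5
  simp only [cbr]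
  abel

end ThreePreLie

namespace TernaryPreNP

variable {K : Type*} [Field K] {A : Type*} [AddCommGroup A] [Module K A] (P : TernaryPreNP K A)

/-- The underlying 3-pre-Lie algebra, forgetting the Zinbiel product. -/
def toThreePreLie : ThreePreLie K A where
  tri := P.tri
  tri_skew := P.tri_skew
  preLie₁ := P.preLie₁
  preLie₂ := P.preLie₂

theorem tri_sym_left (x y u v : A) :
    P.tri (sym P.dia x y) u v = P.dia y (P.tri x u v) + P.dia x (P.tri y u v) := by
  rw [P.tri_skew, P.np2, P.tri_skew x u, P.tri_skew y u]
  simp only [map_neg]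
  abel

theorem tri_sym_right (u v x y : A) :
    P.tri u v (sym P.dia x y) =
      P.dia x (P.tri u v y) + P.dia (cbr P.tri u v x) y +
        (P.dia y (P.tri u v x) + P.dia (cbr P.tri u v y) x) := by
  rw [sym, map_add, P.np1, P.np1]

theorem cbr_leibniz (x1 x2 x3 x4 : A) :
    cbr P.tri x1 x2 (sym P.dia x3 x4) =
      sym P.dia x3 (cbr P.tri x1 x2 x4) + sym P.dia (cbr P.tri x1 x2 x3) x4 := by
  rw [cbr, P.tri_sym_right, P.np2, P.tri_sym_left, sym, sym,
    map_cbr (P.dia x3), map_cbr (P.dia x4)]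
  abel

/-- The sub-adjacent ternary Nambu–Poisson algebra, with the symmetrized product and the cyclic
sum bracket. -/
def subadjacent : TernaryNP K A where
  mul := symLinear P.dia
  br := cbrLinear P.tri
  mul_comm := sym_comm P.dia
  mul_assoc := IsZinbiel.sym_assoc P.zinbiel
  br_skew₁₂ := cbr_skew₁₂ P.tri_skew
  br_skew₂₃ := cbr_skew₂₃ P.tri_skew
  fund := P.toThreePreLie.cbr_fundamental
  leibniz := P.cbr_leibniz

end TernaryPreNP

theorem stmt9_general {K : Type*} [Field K]
    {A : Type*} [AddCommGroup A] [Module K A] (P : TernaryPreNP K A) :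
    ∃ T : TernaryNP K A,
      (∀ x y, T.mul x y = sym P.dia x y) ∧
      (∀ x y z, T.br x y z = cbr P.tri x y z) :=
  ⟨P.subadjacent, fun _ _ ↦ rfl, fun _ _ _ ↦ rfl⟩

/-- a ternary pre-Nambu–Poisson algebra gives a sub-adjacent
ternary Nambu–Poisson algebra. -/
theorem stmt9 {K : Type*} [Field K] [CharZero K]
    {A : Type*} [AddCommGroup A] [Module K A] (P : TernaryPreNP K A) :
    ∃ T : TernaryNP K A,
      (∀ x y, T.mul x y = sym P.dia x y) ∧
      (∀ x y z, T.br x y z = cbr P.tri x y z) := by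
  exact stmt9_general P
end
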